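/- Let (X_i)_{i≥1} be i.i.d. standard normal and X_{(n)} = max_{1≤i≤n} X_i. Let b_n > 0 satisfy 2π b_n² exp(b_n²) = n² and set Y_n = b_n(X_{(n)} - b_n). Then, as n → ∞, the W₁ Wasserstein distance satisfies W₁(L(Y_n), Λ) = ((6(γ² + 2γ + 2) + π²)/(24 log n))(1 + o(1)), where γ is the Euler–Mascheroni constant and Λ is the standard Gumbel distribution. -/

import Mathlib

open MeasureTheory Filter Real

/-- The standard normal cumulative distribution function. -/
noncomputable def stdNormalCDF (x : ℝ) : ℝ :=
  ∫ t in Set.Iic x, Real.exp (-t ^ 2 / 2) / Real.sqrt (2 * Real.pi)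

/-- The standard normal density. -/
noncomputable def stdNormalPDF (x : ℝ) : ℝ :=
  Real.exp (-x ^ 2 / 2) / Real.sqrt (2 * Real.pi)

/-- Scaling constant `a_n = √(2 log n)`. -/
noncomputable def aSeq (n : ℕ) : ℝ := Real.sqrt (2 * Real.log n)

/-- Centering constant
`b_n = √(2 log n) - (log log n + log (4π)) / (2 √(2 log n))`. -/
noncomputable def bSeq (n : ℕ) : ℝ :=
  aSeq n - (Real.log (Real.log n) + Real.log (4 * Real.pi)) / (2 * aSeq n)

/-- `c_n = log (√(4 π log n))`. -/
noncomputable def cSeq (n : ℕ) : ℝ := Real.log (Real.sqrt (4 * Real.pi * Real.log n))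

/-- The CDF of `Y_n = a_n (X_{(n)} - b_n)` where `X_{(n)}` is the maximum of `n`
i.i.d. standard normal random variables: `P(Y_n ≤ x) = Φ(b_n + x/a_n)^n`. -/
noncomputable def Fmax (n : ℕ) (x : ℝ) : ℝ := stdNormalCDF (bSeq n + x / aSeq n) ^ n

/-- The density of `Y_n = a_n (X_{(n)} - b_n)`:
`f_n(x) = n a_n⁻¹ φ(b_n + x/a_n) Φ(b_n + x/a_n)^{n-1}`. -/
noncomputable def fmax (n : ℕ) (x : ℝ) : ℝ :=
  n * (aSeq n)⁻¹ * stdNormalPDF (bSeq n + x / aSeq n) *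
    stdNormalCDF (bSeq n + x / aSeq n) ^ (n - 1)

/-- The density of the standard Gumbel distribution. -/
noncomputable def gumbelPDF (x : ℝ) : ℝ := Real.exp (-x - Real.exp (-x))

/-! ### Gumbel moments -/

lemma hw_gumbel_meas : Measurable (fun x : ℝ => ENNReal.ofReal (gumbelPDF x)) := by
  unfold gumbelPDF; fun_prop

noncomputable def hwMu : Measure ℝ :=
  (volume : Measure ℝ).withDensity (fun x => ENNReal.ofReal (gumbelPDF x))

lemma hw_pdf_nonneg (x : ℝ) : 0 ≤ gumbelPDF x := (Real.exp_pos _).le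

lemma hwMu_integral (g : ℝ → ℝ) : ∫ x, g x ∂hwMu = ∫ x, gumbelPDF x * g x := by
  unfold hwMu
  rw [integral_withDensity_eq_integral_toReal_smul hw_gumbel_meas (by simp)]
  simp [ENNReal.toReal_ofReal, hw_pdf_nonneg]

lemma hwMu_integrable (g : ℝ → ℝ) :
    Integrable g hwMu ↔ Integrable (fun x => gumbelPDF x * g x) := by
  unfold hwMu
  rw [integrable_withDensity_iff_integrable_smul' hw_gumbel_meas (by simp)]
  simp [ENNReal.toReal_ofReal, hw_pdf_nonneg]

lemma hw_image : (fun x : ℝ => Real.exp (-x)) '' Set.univ = Set.Ioi 0 := by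
  ext y
  simp only [Set.image_univ, Set.mem_range, Set.mem_Ioi]
  constructor
  · rintro ⟨x, rfl⟩; exact Real.exp_pos _
  · intro h; exact ⟨-Real.log y, by simp [Real.exp_log h]⟩

lemma hw_deriv (x : ℝ) : HasDerivWithinAt (fun x : ℝ => Real.exp (-x)) (-Real.exp (-x)) Set.univ x := by
  have := ((hasDerivAt_id x).neg).exp
  simpa using this

lemma hw_inj : Set.InjOn (fun x : ℝ => Real.exp (-x)) Set.univ := by
  intro a _ b _ h; simpa using h

lemma hw_trans (t x : ℝ) : |(-Real.exp (-x))| • (Real.exp (-Real.exp (-x)) * (Real.exp (-x)) ^ ((1 - t) - 1))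
    = gumbelPDF x * Real.exp (t * x) := by
  rw [abs_neg, abs_of_pos (Real.exp_pos _), ← Real.exp_mul, smul_eq_mul, gumbelPDF, ← Real.exp_add,
    ← Real.exp_add, ← Real.exp_add]
  congr 1; ring

lemma hw_mgf_int (t : ℝ) (ht : t < 1) : Integrable (fun x : ℝ => Real.exp (t * x)) hwMu := by
  rw [hwMu_integrable]
  have h := Real.GammaIntegral_convergent (s := 1 - t) (by linarith)
  rw [← hw_image, integrableOn_image_iff_integrableOn_abs_deriv_smul MeasurableSet.univ
    (fun x _ => hw_deriv x) hw_inj] at h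
  simp_rw [hw_trans] at h
  simpa using h

lemma hw_mgf (t : ℝ) (ht : t < 1) : ProbabilityTheory.mgf id hwMu t = Real.Gamma (1 - t) := by
  rw [Real.Gamma_eq_integral (by linarith), ← hw_image,
    integral_image_eq_integral_abs_deriv_smul MeasurableSet.univ
    (fun x _ => hw_deriv x) hw_inj]
  simp_rw [hw_trans]
  rw [ProbabilityTheory.mgf, hwMu_integral]
  simp

lemma hw_interior : (0:ℝ) ∈ interior (ProbabilityTheory.integrableExpSet id hwMu) := by
  rw [mem_interior]
  refine ⟨Set.Iio 1, ?_, isOpen_Iio, by simp⟩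
  intro t ht
  exact hw_mgf_int t ht

lemma hw_m1 : deriv (ProbabilityTheory.mgf id hwMu) 0 = Real.eulerMascheroniConstant := by
  have h : (ProbabilityTheory.mgf id hwMu) =ᶠ[nhds 0] fun t => Real.Gamma (1 - t) := by
    filter_upwards [Iio_mem_nhds (show (0:ℝ) < 1 by norm_num)] with t ht using hw_mgf t ht
  rw [h.deriv_eq]
  have h1 : HasDerivAt Real.Gamma (-Real.eulerMascheroniConstant) (1 - 0) := by
    simpa using Real.hasDerivAt_Gamma_one
  have := h1.comp (0:ℝ) ((hasDerivAt_id (0:ℝ)).const_sub 1)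
  simpa [Function.comp_def] using this.deriv

lemma hw_refl (t : ℝ) (h1 : -1 < t) (h2 : t < 1) :
    Real.sin (Real.pi * t) * (ProbabilityTheory.mgf id hwMu t * ProbabilityTheory.mgf id hwMu (-t))
      = Real.pi * t := by
  rw [hw_mgf t h2, hw_mgf (-t) (by linarith)]
  rcases eq_or_ne t 0 with rfl | h0
  · simp
  have hs : Real.sin (Real.pi * t) ≠ 0 := by
    intro h
    rw [Real.sin_eq_zero_iff_of_lt_of_lt (by nlinarith [Real.pi_pos]) (by nlinarith [Real.pi_pos])] at h
    exact h0 ((mul_eq_zero.1 h).resolve_left Real.pi_ne_zero)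
  have h3 : Real.Gamma (1 - -t) = t * Real.Gamma t := by
    rw [← Real.Gamma_add_one h0]; congr 1; ring
  rw [h3]
  have h4 := Real.Gamma_mul_Gamma_one_sub t
  rw [eq_div_iff hs] at h4
  linear_combination t * h4

lemma hw_m2 : iteratedDeriv 2 (ProbabilityTheory.mgf id hwMu) 0
    = Real.eulerMascheroniConstant ^ 2 + Real.pi ^ 2 / 6 := by
  set M := ProbabilityTheory.mgf id hwMu with hM
  have hA : AnalyticAt ℝ M 0 := ProbabilityTheory.analyticAt_mgf hw_interior
  have hC : ∀ k : ℕ, ContDiffAt ℝ k M 0 := fun k => hA.contDiffAt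
  set N : ℝ → ℝ := fun t => M (-t) with hN
  have hCN : ∀ k : ℕ, ContDiffAt ℝ k N 0 := fun k => by
    have : ContDiffAt ℝ k M (-0) := by simpa using hC k
    exact this.comp (0:ℝ) (contDiffAt_id.neg)
  have hNd : ∀ k : ℕ, iteratedDeriv k N 0 = (-1) ^ k * iteratedDeriv k M 0 := by
    intro k
    rw [hN, iteratedDeriv_comp_neg]; simp
  have hM0 : M 0 = 1 := by rw [hM, hw_mgf 0 (by norm_num)]; simp
  have hM1 : iteratedDeriv 1 M 0 = Real.eulerMascheroniConstant := by
    rw [iteratedDeriv_one]; exact hw_m1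
  set S : ℝ → ℝ := fun t => Real.sin (Real.pi * t) with hS
  have hCS : ∀ k : ℕ, ContDiffAt ℝ k S 0 := fun k => by rw [hS]; fun_prop
  have hSd : ∀ k : ℕ, iteratedDeriv k S 0 = Real.pi ^ k * iteratedDeriv k Real.sin 0 := by
    intro k
    rw [hS, iteratedDeriv_comp_const_mul Real.contDiff_sin]; simp
  have hev : S * (M * N) =ᶠ[nhds 0] fun t => Real.pi * t := by
    filter_upwards [Ioo_mem_nhds (show (-1:ℝ) < 0 by norm_num) (show (0:ℝ) < 1 by norm_num)] with t ht
    exact hw_refl t ht.1 ht.2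
  have h3 : iteratedDeriv 3 (S * (M * N)) 0 = 0 := by
    rw [hev.iteratedDeriv_eq]
    simp [iteratedDeriv_succ]
  rw [iteratedDeriv_mul (f := S) (g := M * N) (hCS 3) ((hC 3).mul (hCN 3))] at h3
  simp only [Finset.sum_range_succ, Finset.sum_range_zero] at h3
  have e2 : iteratedDeriv 2 (M * N) 0 = 2 * iteratedDeriv 2 M 0 - 2 * Real.eulerMascheroniConstant ^ 2 := by
    rw [iteratedDeriv_mul (hC 2) (hCN 2)]
    simp only [Finset.sum_range_succ, Finset.sum_range_zero, hNd, hM1]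
    simp [hM0, Nat.choose]; ring
  have e1 : iteratedDeriv 1 (M * N) 0 = 0 := by
    rw [iteratedDeriv_mul (hC 1) (hCN 1)]
    simp only [Finset.sum_range_succ, Finset.sum_range_zero, hNd, hM1]
    simp [hM0]
  have e0 : (M * N) 0 = 1 := by simp [hN, hM0]
  have s0 : S 0 = 0 := by simp [hS]
  have s1 : iteratedDeriv 1 S 0 = Real.pi := by rw [hSd]; simp
  have s3 : iteratedDeriv 3 S 0 = -Real.pi ^ 3 := by
    rw [hSd]; simp [iteratedDeriv_succ]
  have c2 : Nat.choose 3 1 = 3 := rfl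
  simp only [Nat.reduceSub, e2, e1, s1, s3, c2, iteratedDeriv_zero, s0, e0] at h3
  norm_num at h3
  have : Real.pi * (iteratedDeriv 2 M 0 - (Real.eulerMascheroniConstant ^ 2 + Real.pi ^ 2 / 6)) = 0 := by
    linear_combination h3 / 6
  have := (mul_eq_zero.1 this).resolve_left Real.pi_ne_zero
  linarith

lemma hw_limit_integral : ∫ x : ℝ, Real.exp (-Real.exp (-x)) * (Real.exp (-x) * (x ^ 2 / 2 + x + 1))
    = (6 * (Real.eulerMascheroniConstant ^ 2 + 2 * Real.eulerMascheroniConstant + 2) +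
              Real.pi ^ 2) / 12 := by
  have i2 := ProbabilityTheory.integrable_pow_of_mem_interior_integrableExpSet hw_interior 2
  have i1 := ProbabilityTheory.integrable_pow_of_mem_interior_integrableExpSet hw_interior 1
  have i0 := ProbabilityTheory.integrable_pow_of_mem_interior_integrableExpSet hw_interior 0
  have m2 := ProbabilityTheory.iteratedDeriv_mgf_zero hw_interior 2
  have m1 := ProbabilityTheory.iteratedDeriv_mgf_zero hw_interior 1
  have m0 := ProbabilityTheory.iteratedDeriv_mgf_zero hw_interior 0
  rw [hw_m2] at m2
  rw [iteratedDeriv_one, hw_m1] at m1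
  rw [iteratedDeriv_zero, hw_mgf 0 (by norm_num)] at m0
  simp only [id, Pi.pow_apply, pow_one, pow_zero, sub_zero, Real.Gamma_one] at i0 i1 i2 m0 m1 m2
  have h : ∫ x : ℝ, Real.exp (-Real.exp (-x)) * (Real.exp (-x) * (x ^ 2 / 2 + x + 1))
      = ∫ x, (x ^ 2 / 2 + x + 1) ∂hwMu := by
    rw [hwMu_integral]
    congr 1; ext x
    rw [gumbelPDF, Real.exp_sub, Real.exp_neg (Real.exp (-x))]
    field_simp
  have i12 : Integrable (fun x : ℝ => x ^ 2 / 2 + x) hwMu := (i2.div_const 2).add i1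
  rw [h, integral_add i12 i0, integral_add (i2.div_const 2) i1, integral_div, ← m2, ← m1, ← m0]
  ring
/-! ### The tail function -/

noncomputable def hwT (e x : ℝ) : ℝ := ∫ u in Set.Ioi x, Real.exp (-u) * Real.exp (-(e * u ^ 2 / 2))

lemma hw_int_pow (k : ℕ) (x : ℝ) : IntegrableOn (fun u : ℝ => u ^ k * Real.exp (-u)) (Set.Ioi x) := by
  refine integrable_of_isBigO_exp_neg (b := 1 / 2) (by norm_num) (by fun_prop) ?_
  have h := (isLittleO_pow_exp_pos_mul_atTop k (show (0:ℝ) < 1 / 2 by norm_num)).isBigO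
  have h2 := h.mul (Asymptotics.isBigO_refl (fun u : ℝ => Real.exp (-u)) atTop)
  refine h2.congr_right ?_
  intro u
  rw [← Real.exp_add]; congr 1; ring

lemma hw_int_exp (x : ℝ) : IntegrableOn (fun u : ℝ => Real.exp (-u)) (Set.Ioi x) := by
  simpa using hw_int_pow 0 x

lemma hwT_int (e x : ℝ) (he : 0 ≤ e) :
    IntegrableOn (fun u : ℝ => Real.exp (-u) * Real.exp (-(e * u ^ 2 / 2))) (Set.Ioi x) := by
  refine Integrable.mono' (hw_int_exp x) (by fun_prop) (ae_of_all _ fun u => ?_)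
  rw [Real.norm_of_nonneg (by positivity)]
  have : Real.exp (-(e * u ^ 2 / 2)) ≤ 1 := by
    rw [Real.exp_le_one_iff]; have : 0 ≤ e * u ^ 2 / 2 := by positivity
    linarith
  nlinarith [Real.exp_pos (-u)]

lemma hw_int_sq (x : ℝ) : ∫ u in Set.Ioi x, u ^ 2 * Real.exp (-u) = Real.exp (-x) * (x ^ 2 + 2 * x + 2) := by
  have hd : ∀ u : ℝ, HasDerivAt (fun u : ℝ => -(u ^ 2 * Real.exp (-u) + 2 * (u ^ 1 * Real.exp (-u)) + 2 * (u ^ 0 * Real.exp (-u))))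
      (u ^ 2 * Real.exp (-u)) u := by
    intro u
    have he : HasDerivAt (fun u : ℝ => Real.exp (-u)) (-Real.exp (-u)) u := by
      simpa using ((hasDerivAt_id u).neg).exp
    have h := ((((hasDerivAt_pow 2 u).mul he).add (((hasDerivAt_pow 1 u).mul he).const_mul 2)).add
      (((hasDerivAt_pow 0 u).mul he).const_mul 2)).neg
    refine h.congr_deriv ?_
    simp; ring
  have ht : ∀ k : ℕ, Tendsto (fun u : ℝ => u ^ k * Real.exp (-u)) atTop (nhds 0) :=
    fun k => Real.tendsto_pow_mul_exp_neg_atTop_nhds_zero k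
  have := integral_Ioi_of_hasDerivAt_of_tendsto (a := x) (m := 0) (hd x).continuousAt.continuousWithinAt
    (fun u _ => hd u) (hw_int_pow 2 x)
    (by simpa using (((ht 2).add ((ht 1).const_mul 2)).add ((ht 0).const_mul 2)).neg)
  rw [this]; simp; ring

lemma hwT_nonneg (e x : ℝ) : 0 ≤ hwT e x :=
  integral_nonneg fun u => by positivity

lemma hwT_diff (e x : ℝ) (he : 0 ≤ e) :
    Real.exp (-x) - hwT e x = ∫ u in Set.Ioi x, Real.exp (-u) * (1 - Real.exp (-(e * u ^ 2 / 2))) := by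
  rw [hwT, ← integral_exp_neg_Ioi x, ← integral_sub (hw_int_exp x) (hwT_int e x he)]
  congr 1; ext u; ring

lemma hwT_le (e x : ℝ) (he : 0 ≤ e) : hwT e x ≤ Real.exp (-x) := by
  rw [← sub_nonneg, hwT_diff e x he]
  refine integral_nonneg fun u => ?_
  have : Real.exp (-(e * u ^ 2 / 2)) ≤ 1 := by
    rw [Real.exp_le_one_iff]; have : 0 ≤ e * u ^ 2 / 2 := by positivity
    linarith
  exact mul_nonneg (Real.exp_pos _).le (by linarith)

lemma hwT_int_diff (e x : ℝ) (he : 0 ≤ e) :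
    IntegrableOn (fun u => Real.exp (-u) * (1 - Real.exp (-(e * u ^ 2 / 2)))) (Set.Ioi x) := by
  refine ((hw_int_exp x).sub (hwT_int e x he)).congr (ae_of_all _ fun u => ?_)
  simp; ring

lemma hwT_upper (e x : ℝ) (he : 0 ≤ e) :
    Real.exp (-x) - hwT e x ≤ e * (Real.exp (-x) * (x ^ 2 / 2 + x + 1)) := by
  have h : e * (Real.exp (-x) * (x ^ 2 / 2 + x + 1)) = ∫ u in Set.Ioi x, e / 2 * (u ^ 2 * Real.exp (-u)) := by
    rw [integral_const_mul, hw_int_sq]; ring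
  rw [h, hwT_diff e x he]
  refine integral_mono (hwT_int_diff e x he) ((hw_int_pow 2 x).const_mul _) fun u => ?_
  have := Real.add_one_le_exp (-(e * u ^ 2 / 2))
  show Real.exp (-u) * (1 - Real.exp (-(e * u ^ 2 / 2))) ≤ e / 2 * (u ^ 2 * Real.exp (-u))
  nlinarith [Real.exp_pos (-u)]

/-- `e^{-v} ≤ 1 - v + v²/2` for `v ≥ 0`. -/
lemma hw_exp_neg_le (v : ℝ) (hv : 0 ≤ v) : Real.exp (-v) ≤ 1 - v + v ^ 2 / 2 := by
  have h := Real.quadratic_le_exp_of_nonneg hv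
  rw [Real.exp_neg, inv_le_iff_one_le_mul₀ (Real.exp_pos _)]
  have : 0 < 1 - v + v ^ 2 / 2 := by nlinarith [sq_nonneg (v - 1)]
  nlinarith [sq_nonneg (v^2)]

lemma hwT_lower (e x : ℝ) (he : 0 ≤ e) :
    e * (Real.exp (-x) * (x ^ 2 / 2 + x + 1)) - e ^ 2 * ∫ u in Set.Ioi x, (u ^ 4 * Real.exp (-u)) / 8 ≤
      Real.exp (-x) - hwT e x := by
  have h : e * (Real.exp (-x) * (x ^ 2 / 2 + x + 1)) = ∫ u in Set.Ioi x, e / 2 * (u ^ 2 * Real.exp (-u)) := by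
    rw [integral_const_mul, hw_int_sq]; ring
  rw [h, hwT_diff e x he, ← integral_const_mul,
    ← integral_sub ((hw_int_pow 2 x).const_mul _) (((hw_int_pow 4 x).div_const 8).const_mul _)]
  refine integral_mono (((hw_int_pow 2 x).const_mul _).sub (((hw_int_pow 4 x).div_const 8).const_mul _))
    (hwT_int_diff e x he) fun u => ?_
  have := hw_exp_neg_le (e * u ^ 2 / 2) (by positivity)
  show e / 2 * (u ^ 2 * Real.exp (-u)) - e ^ 2 * (u ^ 4 * Real.exp (-u) / 8) ≤
    Real.exp (-u) * (1 - Real.exp (-(e * u ^ 2 / 2)))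
  have h2 : Real.exp (-u) * (e * u ^ 2 / 2 - (e * u ^ 2 / 2) ^ 2 / 2) ≤
    Real.exp (-u) * (1 - Real.exp (-(e * u ^ 2 / 2))) :=
    mul_le_mul_of_nonneg_left (by linarith) (Real.exp_pos _).le
  refine le_trans (le_of_eq ?_) h2
  ring

lemma hwT_left (e x : ℝ) (he : 0 < e) (hx : x ≤ 0) (hx2 : -2 ≤ e * x) : -4 * x - 49 ≤ hwT e x := by
  have hI : ∫ u in (x / 2)..0, Real.exp (-u / 2) = 2 * (Real.exp (-x / 4) - 1) := by
    have hd : ∀ u ∈ Set.uIcc (x / 2) 0, HasDerivAt (fun u : ℝ => -2 * Real.exp (-u / 2)) (Real.exp (-u / 2)) u := by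
      intro u _
      have := ((((hasDerivAt_id u).neg).div_const 2).exp).const_mul (-2)
      refine this.congr_deriv ?_
      simp; ring
    rw [intervalIntegral.integral_eq_sub_of_hasDerivAt hd (Continuous.intervalIntegrable (by fun_prop) _ _)]
    have : -(x / 2) / 2 = -x / 4 := by ring
    rw [this]; simp; ring
  have h1 : ∫ u in Set.Ioc (x / 2) 0, Real.exp (-u / 2) ≤
      ∫ u in Set.Ioc (x / 2) 0, Real.exp (-u) * Real.exp (-(e * u ^ 2 / 2)) := by
    refine setIntegral_mono_on ?_ ?_ measurableSet_Ioc ?_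
    · exact (Continuous.integrableOn_Ioc (by fun_prop))
    · exact (Continuous.integrableOn_Ioc (by fun_prop))
    · intro u hu
      rw [← Real.exp_add, Real.exp_le_exp]
      have h3 : -1 ≤ e * u := by nlinarith [hu.1]
      nlinarith [hu.2]
  have h2 : ∫ u in Set.Ioc (x / 2) 0, Real.exp (-u) * Real.exp (-(e * u ^ 2 / 2)) ≤ hwT e x := by
    refine setIntegral_mono_set (hwT_int e x he.le) (ae_of_all _ fun u => by positivity) ?_
    refine LE.le.eventuallyLE fun u hu => ?_
    have := hu.1
    simp only [Set.mem_Ioi]; linarith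
  rw [intervalIntegral.integral_of_le (by linarith)] at hI
  have h3 := Real.quadratic_le_exp_of_nonneg (show 0 ≤ -x / 4 by linarith)
  nlinarith [sq_nonneg (x + 28)]
/-! ### The normal distribution function -/

lemma hw_phi_int : Integrable (fun t : ℝ => Real.exp (-t ^ 2 / 2) / Real.sqrt (2 * Real.pi)) := by
  have h := (integrable_exp_neg_mul_sq (show (0:ℝ) < 1 / 2 by norm_num)).div_const (Real.sqrt (2 * Real.pi))
  refine h.congr (ae_of_all _ fun t => ?_)
  simp only
  congr 2; ring

lemma hw_phi_total : ∫ t : ℝ, Real.exp (-t ^ 2 / 2) / Real.sqrt (2 * Real.pi) = 1 := by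
  rw [integral_div]
  have h := integral_gaussian (1 / 2)
  have h2 : ∀ t : ℝ, Real.exp (-t ^ 2 / 2) = Real.exp (-(1 / 2) * t ^ 2) := fun t => by congr 1; ring
  simp_rw [h2]
  rw [h]
  have : Real.pi / (1 / 2) = 2 * Real.pi := by ring
  rw [this]
  exact div_self (by positivity)

lemma hw_cdf_nonneg (y : ℝ) : 0 ≤ stdNormalCDF y := integral_nonneg fun t => by positivity

lemma hw_cdf_mono : Monotone stdNormalCDF := by
  intro y z h
  exact setIntegral_mono_set hw_phi_int.integrableOn (ae_of_all _ fun u => by positivity)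
    (LE.le.eventuallyLE (Set.Iic_subset_Iic.2 h))

lemma hw_cdf_compl (y : ℝ) : 1 - stdNormalCDF y =
    ∫ t in Set.Ioi y, Real.exp (-t ^ 2 / 2) / Real.sqrt (2 * Real.pi) := by
  rw [← hw_phi_total, stdNormalCDF, ← intervalIntegral.integral_Iic_add_Ioi (b := y) hw_phi_int.integrableOn hw_phi_int.integrableOn]
  ring

lemma hw_cdf_le_one (y : ℝ) : stdNormalCDF y ≤ 1 := by
  rw [← sub_nonneg, hw_cdf_compl]
  exact integral_nonneg fun t => by positivity

lemma hw_cdf_tail (y : ℝ) (hy : y ≤ 0) : stdNormalCDF y ≤ Real.exp (-y ^ 2 / 2) := by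
  have h : stdNormalCDF y = ∫ t in Set.Iic (0:ℝ), Real.exp (-(t + y) ^ 2 / 2) / Real.sqrt (2 * Real.pi) := by
    have him : (fun t : ℝ => t + y) '' Set.Iic 0 = Set.Iic y := by simp
    rw [stdNormalCDF, ← him, integral_image_eq_integral_abs_deriv_smul (f := fun t : ℝ => t + y) (f' := fun _ => 1) measurableSet_Iic
      (fun x _ => ((hasDerivAt_id x).add_const y).hasDerivWithinAt)
      ((add_left_injective y).injOn)]
    simp
  have h2 : stdNormalCDF y ≤ Real.exp (-y ^ 2 / 2) * stdNormalCDF 0 := by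
    rw [h, stdNormalCDF, ← integral_const_mul]
    refine setIntegral_mono_on ?_ (hw_phi_int.integrableOn.const_mul _) measurableSet_Iic ?_
    · exact (hw_phi_int.comp_add_right y).integrableOn
    · intro t ht
      rw [mul_div_assoc', ← Real.exp_add]
      gcongr
      have : 0 ≤ t * y := mul_nonneg_of_nonpos_of_nonpos ht hy
      nlinarith
  refine h2.trans ?_
  exact mul_le_of_le_one_right (Real.exp_pos _).le (hw_cdf_le_one 0)

lemma hw_n_eq (n b : ℝ) (hn : 0 ≤ n) (hb : 0 < b)
    (h : 2 * Real.pi * b ^ 2 * Real.exp (b ^ 2) = n ^ 2) :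
    n = Real.sqrt (2 * Real.pi) * b * Real.exp (b ^ 2 / 2) := by
  have hp : 0 ≤ Real.sqrt (2 * Real.pi) * b * Real.exp (b ^ 2 / 2) := by positivity
  rw [← sq_eq_sq₀ hn hp, ← h, mul_pow, mul_pow, Real.sq_sqrt (by positivity), ← Real.exp_nat_mul]
  congr 2; push_cast; ring

lemma hw_cdf_T (n b x : ℝ) (hn : 0 ≤ n) (hb : 0 < b)
    (h : 2 * Real.pi * b ^ 2 * Real.exp (b ^ 2) = n ^ 2) :
    n * (1 - stdNormalCDF (b + x / b)) = hwT (1 / b ^ 2) x := by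
  have him : (fun u : ℝ => b + u / b) '' Set.Ioi x = Set.Ioi (b + x / b) := by
    ext z
    simp only [Set.mem_image, Set.mem_Ioi]
    constructor
    · rintro ⟨u, hu, rfl⟩; gcongr
    · intro hz
      refine ⟨b * (z - b), ?_, ?_⟩
      · have : x / b < z - b := by linarith
        rw [div_lt_iff₀ hb] at this; linarith
      · field_simp; ring
  rw [hw_cdf_compl, ← him, integral_image_eq_integral_abs_deriv_smul (f := fun u : ℝ => b + u / b) (f' := fun _ => 1 / b) measurableSet_Ioi
      (fun x _ => (((hasDerivAt_id x).div_const b).const_add b).hasDerivWithinAt)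
      (fun u _ v _ huv => by simpa [hb.ne'] using huv), ← integral_const_mul, hwT]
  congr 1; ext u
  rw [abs_of_pos (by positivity), smul_eq_mul]
  have h1 : -(b + u / b) ^ 2 / 2 = -(b ^ 2 / 2) + (-u + -(1 / b ^ 2 * u ^ 2 / 2)) := by
    field_simp; ring
  rw [h1, Real.exp_add, Real.exp_add, Real.exp_neg (b ^ 2 / 2), hw_n_eq n b hn hb h]
  have : Real.sqrt (2 * Real.pi) ≠ 0 := by positivity
  field_simp

/-! ### Bounds -/

lemma hw_pow_sub (a c : ℝ) (hc : 0 ≤ c) (hca : c ≤ a) (n : ℕ) :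
    a ^ (n + 1) - c ^ (n + 1) ≤ (n + 1) * (a - c) * a ^ n := by
  induction n with
  | zero => simp
  | succ n ih =>
    have h1 : c ^ (n + 1) ≤ a ^ (n + 1) := by gcongr
    have ha : 0 ≤ a := hc.trans hca
    have h2 := mul_le_mul_of_nonneg_left ih ha
    have h3 := mul_le_mul_of_nonneg_right h1 (sub_nonneg.2 hca)
    have e1 : a ^ (n + 1 + 1) - c ^ (n + 1 + 1) = a * (a ^ (n + 1) - c ^ (n + 1)) + c ^ (n + 1) * (a - c) := by ring
    rw [e1]; push_cast
    refine (add_le_add h2 h3).trans (le_of_eq ?_)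
    ring

lemma hw_pow_exp (n : ℕ) (hn : 1 ≤ n) (T : ℝ) (h0 : 0 ≤ T) (h1 : T ≤ n) :
    Real.exp (-T) - (1 - T / n) ^ n ≤ 2 * T ^ 2 * Real.exp (-T) / n ∧ (1 - T / n) ^ n ≤ Real.exp (-T) := by
  obtain ⟨m, rfl⟩ : ∃ m, n = m + 1 := ⟨n - 1, by omega⟩
  have hnp : (0:ℝ) < ((m + 1 : ℕ) : ℝ) := by positivity
  set N : ℝ := ((m + 1 : ℕ) : ℝ) with hN
  set t := T / N with ht
  have ht0 : 0 ≤ t := by positivity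
  have ht1 : t ≤ 1 := by rw [ht, div_le_one hnp]; exact h1
  have hT : T = N * t := by rw [ht]; field_simp
  have hc : 1 - t ≤ Real.exp (-t) := by linarith [Real.add_one_le_exp (-t)]
  have he : Real.exp (-T) = Real.exp (-t) ^ (m + 1) := by
    rw [← Real.exp_nat_mul, hT]; congr 1; rw [← hN]; ring
  constructor
  · have h := hw_pow_sub (Real.exp (-t)) (1 - t) (by linarith) hc m
    rw [← he] at h
    refine h.trans ?_
    have h2 := hw_exp_neg_le t ht0
    have h3 : Real.exp (-t) ^ m = Real.exp (-T) * Real.exp t := by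
      rw [he, pow_succ, mul_assoc, ← Real.exp_add]; simp
    have h4 : Real.exp t ≤ 4 := by
      have := Real.exp_le_exp.2 ht1
      linarith [Real.exp_one_lt_d9]
    rw [h3]
    have h5 : ((m:ℝ) + 1) = N := by rw [hN]; push_cast; ring
    rw [h5]
    have h6 : 2 * T ^ 2 * Real.exp (-T) / N = N * (t ^ 2 / 2) * (Real.exp (-T) * 4) := by
      rw [hT]; field_simp; ring
    rw [h6]
    have : Real.exp (-t) - (1 - t) ≤ t ^ 2 / 2 := by linarith
    gcongr
  · rw [he]; exact pow_le_pow_left₀ (by linarith) hc _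

lemma hw_exp_diff (T E : ℝ) (h : T ≤ E) :
    0 ≤ Real.exp (-T) - Real.exp (-E) ∧ Real.exp (-T) - Real.exp (-E) ≤ (E - T) * Real.exp (-T) := by
  constructor
  · rw [sub_nonneg, Real.exp_le_exp]; linarith
  · have : Real.exp (-E) = Real.exp (-T) * Real.exp (-(E - T)) := by rw [← Real.exp_add]; congr 1; ring
    rw [this]
    have h2 := Real.add_one_le_exp (-(E - T))
    nlinarith [Real.exp_pos (-T)]

lemma hw_g_int : Integrable (fun x : ℝ => (1 + x ^ 2) * Real.exp (-|x|)) := by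
  have h0 : IntegrableOn (fun x : ℝ => (1 + x ^ 2) * Real.exp (-x)) (Set.Ioi 0) := by
    refine ((hw_int_pow 0 0).add (hw_int_pow 2 0)).congr (ae_of_all _ fun u => ?_)
    simp; ring
  have h1 : IntegrableOn (fun x : ℝ => (1 + x ^ 2) * Real.exp (-|x|)) (Set.Ioi 0) := by
    refine h0.congr_fun (fun u hu => ?_) measurableSet_Ioi
    simp only [Set.mem_Ioi] at hu
    simp only [abs_of_pos hu]
  have h2 : IntegrableOn (fun x : ℝ => (1 + x ^ 2) * Real.exp (-|x|)) (Set.Iio 0) := by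
    have := h1.comp_neg
    simpa using this
  rw [← integrableOn_univ, ← Set.Iio_union_Ici (a := (0:ℝ))]
  exact h2.union (Iff.mpr integrableOn_Ici_iff_integrableOn_Ioi h1)

lemma hw_cdf_pow (n : ℕ) (hn : 1 ≤ n) (b x : ℝ) (hb : 0 < b)
    (h : 2 * Real.pi * b ^ 2 * Real.exp (b ^ 2) = (n:ℝ) ^ 2) :
    stdNormalCDF (b + x / b) = 1 - hwT (1 / b ^ 2) x / n ∧ hwT (1 / b ^ 2) x ≤ n := by
  have h1 := hw_cdf_T n b x (by positivity) hb h
  have hnp : (0:ℝ) < n := by exact_mod_cast hn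
  constructor
  · rw [← h1]; field_simp; ring
  · rw [← h1]
    have := hw_cdf_nonneg (b + x / b)
    nlinarith

/-- Two-sided control of `F_n - exp(-T)`. -/
lemma hw_core (n : ℕ) (hn : 1 ≤ n) (b x : ℝ) (hb : 0 < b)
    (h : 2 * Real.pi * b ^ 2 * Real.exp (b ^ 2) = (n:ℝ) ^ 2) :
    Real.exp (-hwT (1 / b ^ 2) x) - stdNormalCDF (b + x / b) ^ n ≤
      2 * (Real.exp (-x)) ^ 2 * Real.exp (-hwT (1 / b ^ 2) x) / n ∧
    stdNormalCDF (b + x / b) ^ n ≤ Real.exp (-hwT (1 / b ^ 2) x) := by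
  obtain ⟨h1, h2⟩ := hw_cdf_pow n hn b x hb h
  have h0 := hwT_nonneg (1 / b ^ 2) x
  have h3 := hwT_le (1 / b ^ 2) x (by positivity)
  obtain ⟨h4, h5⟩ := hw_pow_exp n hn _ h0 h2
  rw [h1]
  refine ⟨h4.trans ?_, h5⟩
  gcongr

lemma hw_dom_mid (n : ℕ) (hn : 1 ≤ n) (b x : ℝ) (hb : 0 < b) (hbn : b ^ 2 ≤ n)
    (h : 2 * Real.pi * b ^ 2 * Real.exp (b ^ 2) = (n:ℝ) ^ 2) :
    b ^ 2 * |stdNormalCDF (b + x / b) ^ n - Real.exp (-Real.exp (-x))| ≤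
      (2 * (Real.exp (-x)) ^ 2 + Real.exp (-x) * (x ^ 2 / 2 + x + 1)) * Real.exp (-hwT (1 / b ^ 2) x) := by
  obtain ⟨h1, h2⟩ := hw_core n hn b x hb h
  have hu := hwT_upper (1 / b ^ 2) x (by positivity)
  obtain ⟨h3, h4⟩ := hw_exp_diff _ _ (hwT_le (1 / b ^ 2) x (by positivity))
  set T := hwT (1 / b ^ 2) x with hT
  set F := stdNormalCDF (b + x / b) ^ n with hF
  have hnp : (0:ℝ) < n := by exact_mod_cast hn
  set q := Real.exp (-x) * (x ^ 2 / 2 + x + 1) with hq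
  have hq0 : 0 ≤ q := by
    apply mul_nonneg (Real.exp_pos _).le; nlinarith [sq_nonneg (x + 1)]
  have hb2 : 0 < b ^ 2 := by positivity
  have a1 : b ^ 2 * (2 * (Real.exp (-x)) ^ 2 * Real.exp (-T) / n) ≤ 2 * (Real.exp (-x)) ^ 2 * Real.exp (-T) := by
    rw [mul_div_assoc', div_le_iff₀ hnp, mul_comm]
    gcongr
  have a2 : b ^ 2 * ((Real.exp (-x) - T) * Real.exp (-T)) ≤ q * Real.exp (-T) := by
    have : b ^ 2 * (Real.exp (-x) - T) ≤ q := by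
      refine (mul_le_mul_of_nonneg_left hu hb2.le).trans (le_of_eq ?_)
      field_simp
    rw [← mul_assoc]; gcongr
  have a3 : b ^ 2 * (Real.exp (-T) - F) ≤ 2 * (Real.exp (-x)) ^ 2 * Real.exp (-T) :=
    (mul_le_mul_of_nonneg_left h1 hb2.le).trans a1
  have a4 : b ^ 2 * (Real.exp (-T) - Real.exp (-Real.exp (-x))) ≤ q * Real.exp (-T) :=
    (mul_le_mul_of_nonneg_left h4 hb2.le).trans a2
  have a5 : 0 ≤ b ^ 2 * (Real.exp (-T) - F) := mul_nonneg hb2.le (by linarith)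
  have a6 : 0 ≤ b ^ 2 * (Real.exp (-T) - Real.exp (-Real.exp (-x))) := mul_nonneg hb2.le h3
  have a7 : b ^ 2 * |F - Real.exp (-Real.exp (-x))| = |b ^ 2 * (F - Real.exp (-Real.exp (-x)))| := by
    rw [abs_mul, abs_of_pos hb2]
  rw [a7, abs_le]
  constructor <;> nlinarith

lemma hw_dom (n : ℕ) (hn : 4 ≤ n) (b x : ℝ) (hb : 1 ≤ b) (hbn : b ^ 2 ≤ n)
    (h : 2 * Real.pi * b ^ 2 * Real.exp (b ^ 2) = (n:ℝ) ^ 2) :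
    b ^ 2 * |stdNormalCDF (b + x / b) ^ n - Real.exp (-Real.exp (-x))| ≤
      4 * Real.exp 49 * ((1 + x ^ 2) * Real.exp (-|x|)) := by
  have hb0 : 0 < b := by linarith
  have h49 : 1 ≤ Real.exp 49 := Real.one_le_exp (by norm_num)
  have hb2 : 0 < b ^ 2 := by positivity
  rcases lt_or_ge x (-2 * b ^ 2) with hx | hx
  · have hx0 : x < 0 := by nlinarith
    set y := b + x / b with hy
    have hxy : x = b * y - b ^ 2 := by rw [hy]; field_simp; ring
    have hyb : y ≤ -b := by nlinarith
    have hF : stdNormalCDF y ^ n ≤ Real.exp x := by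
      have h1 := pow_le_pow_left₀ (hw_cdf_nonneg y) (hw_cdf_tail y (by linarith)) n
      refine h1.trans ?_
      rw [← Real.exp_nat_mul, Real.exp_le_exp, hxy]
      have hn4 : (4:ℝ) ≤ n := by exact_mod_cast hn
      nlinarith [mul_nonneg (sub_nonneg.2 hn4) (sq_nonneg y), sq_nonneg (y + b)]
    have hL : Real.exp (-Real.exp (-x)) ≤ Real.exp x := by
      rw [Real.exp_le_exp]; linarith [Real.add_one_le_exp (-x)]
    have hF0 : 0 ≤ stdNormalCDF y ^ n := pow_nonneg (hw_cdf_nonneg y) n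
    have hA : |stdNormalCDF y ^ n - Real.exp (-Real.exp (-x))| ≤ Real.exp x := by
      rw [abs_le]; constructor <;> linarith [Real.exp_pos (-Real.exp (-x)), Real.exp_pos x]
    rw [abs_of_neg hx0, neg_neg]
    have : b ^ 2 ≤ 1 + x ^ 2 := by nlinarith
    calc _ ≤ (1 + x ^ 2) * Real.exp x := by gcongr
      _ ≤ _ := by
        have : 0 ≤ (1 + x ^ 2) * Real.exp x := by positivity
        nlinarith
  · refine (hw_dom_mid n (by omega) b x hb0 hbn h).trans ?_
    rcases le_or_gt 0 x with hx0 | hx0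
    · rw [abs_of_nonneg hx0]
      have hT : Real.exp (-hwT (1 / b ^ 2) x) ≤ 1 := by
        rw [Real.exp_le_one_iff]; linarith [hwT_nonneg (1 / b ^ 2) x]
      have hE : Real.exp (-x) ≤ 1 := by rw [Real.exp_le_one_iff]; linarith
      have hE0 := Real.exp_pos (-x)
      have hA : 2 * Real.exp (-x) ^ 2 + Real.exp (-x) * (x ^ 2 / 2 + x + 1) ≤ 4 * ((1 + x ^ 2) * Real.exp (-x)) := by
        have : 2 * Real.exp (-x) + (x ^ 2 / 2 + x + 1) ≤ 4 * (1 + x ^ 2) := by nlinarith [sq_nonneg (x - 1)]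
        nlinarith
      calc _ ≤ (4 * ((1 + x ^ 2) * Real.exp (-x))) * 1 := by gcongr
        _ ≤ _ := by
          have : 0 ≤ (1 + x ^ 2) * Real.exp (-x) := by positivity
          nlinarith
    · rw [abs_of_neg hx0, neg_neg]
      have hT := hwT_left (1 / b ^ 2) x (by positivity) hx0.le (by
        rw [one_div, inv_mul_eq_div, le_div_iff₀ hb2]; exact hx)
      have hT2 : Real.exp (-hwT (1 / b ^ 2) x) ≤ Real.exp 49 * (Real.exp x) ^ 4 := by
        rw [← Real.exp_nat_mul, ← Real.exp_add, Real.exp_le_exp]; push_cast; linarith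
      have hE : Real.exp x ≤ 1 := by rw [Real.exp_le_one_iff]; linarith
      have hE0 := Real.exp_pos x
      have hp0 : 0 ≤ x ^ 2 / 2 + x + 1 := by nlinarith [sq_nonneg (x + 1)]
      calc _ ≤ (2 * Real.exp (-x) ^ 2 + Real.exp (-x) * (x ^ 2 / 2 + x + 1)) * (Real.exp 49 * (Real.exp x) ^ 4) := by gcongr
        _ = Real.exp 49 * (Real.exp x * (2 * Real.exp x + (x ^ 2 / 2 + x + 1) * (Real.exp x) ^ 2)) := by
          rw [Real.exp_neg]; field_simp
        _ ≤ Real.exp 49 * (Real.exp x * (2 * 1 + (x ^ 2 / 2 + x + 1) * 1 ^ 2)) := by gcongr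
        _ ≤ Real.exp 49 * (Real.exp x * (4 * (1 + x ^ 2))) := by gcongr; nlinarith
        _ = _ := by ring

/-! ### Asymptotics -/

lemma hw_b_tendsto (b : ℕ → ℝ)
    (hb : ∀ n : ℕ, 1 ≤ n → 0 < b n ∧
      2 * Real.pi * (b n) ^ 2 * Real.exp ((b n) ^ 2) = (n : ℝ) ^ 2) : Tendsto b atTop atTop := by
  rw [tendsto_atTop]
  intro M
  have hn : Tendsto (fun n : ℕ => (n:ℝ) ^ 2) atTop atTop :=
    (tendsto_pow_atTop two_ne_zero).comp tendsto_natCast_atTop_atTop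
  filter_upwards [hn.eventually_gt_atTop (2 * Real.pi * M ^ 2 * Real.exp (M ^ 2)), eventually_ge_atTop 1] with n h1 h2
  obtain ⟨h3, h4⟩ := hb n h2
  by_contra! h5
  rw [← h4] at h1
  have : 2 * Real.pi * (b n) ^ 2 * Real.exp ((b n) ^ 2) ≤ 2 * Real.pi * M ^ 2 * Real.exp (M ^ 2) := by
    gcongr
  linarith

lemma hw_b_cube (n b : ℝ) (hn : 0 ≤ n) (hb : 0 < b)
    (h : 2 * Real.pi * b ^ 2 * Real.exp (b ^ 2) = n ^ 2) : b ^ 3 ≤ n := by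
  rw [← sq_le_sq₀ (by positivity) hn, ← h]
  have h1 := Real.quadratic_le_exp_of_nonneg (sq_nonneg b)
  have h2 : (b ^ 2) ^ 2 / 2 ≤ Real.exp (b ^ 2) := by nlinarith [sq_nonneg b]
  calc (b ^ 3) ^ 2 = 2 * 1 * b ^ 2 * ((b ^ 2) ^ 2 / 2) := by ring
    _ ≤ _ := by gcongr; linarith [Real.pi_gt_three]

lemma hw_pw_lower (n : ℕ) (hn : 1 ≤ n) (b x : ℝ) (hb0 : 0 < b)
    (h : 2 * Real.pi * b ^ 2 * Real.exp (b ^ 2) = (n:ℝ) ^ 2) :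
    Real.exp (-Real.exp (-x)) * (Real.exp (-x) * (x ^ 2 / 2 + x + 1) -
        (1 / b ^ 2) * ∫ u in Set.Ioi x, (u ^ 4 * Real.exp (-u)) / 8) - 2 * (Real.exp (-x)) ^ 2 * (1 / b) ≤
      b ^ 2 * (stdNormalCDF (b + x / b) ^ n - Real.exp (-Real.exp (-x))) := by
  have hnp : (0:ℝ) < n := by exact_mod_cast hn
  obtain ⟨h1, h2⟩ := hw_core n hn b x hb0 h
  have hl := hwT_lower (1 / b ^ 2) x (by positivity)
  have hc := hw_b_cube n b hnp.le hb0 h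
  have hT0 := hwT_nonneg (1 / b ^ 2) x
  have hb2 : 0 < b ^ 2 := by positivity
  set q := Real.exp (-x) * (x ^ 2 / 2 + x + 1) with hq
  set T := hwT (1 / b ^ 2) x with hT
  set F := stdNormalCDF (b + x / b) ^ n with hF
  set L := Real.exp (-Real.exp (-x)) with hL
  set K := ∫ u in Set.Ioi x, (u ^ 4 * Real.exp (-u)) / 8 with hK
  have hL0 : 0 < L := Real.exp_pos _
  have hd : Real.exp (-T) = L * Real.exp (Real.exp (-x) - T) := by
    rw [hL, ← Real.exp_add]; congr 1; ring
  have hT1 : Real.exp (-T) ≤ 1 := by rw [Real.exp_le_one_iff]; linarith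
  have a1 : b ^ 2 * (2 * (Real.exp (-x)) ^ 2 * Real.exp (-T) / n) ≤ 2 * (Real.exp (-x)) ^ 2 * (1 / b) := by
    calc b ^ 2 * (2 * (Real.exp (-x)) ^ 2 * Real.exp (-T) / n)
        ≤ b ^ 2 * (2 * (Real.exp (-x)) ^ 2 * 1 / b ^ 3) := by gcongr
      _ = _ := by field_simp
  have a2 : b ^ 2 * (Real.exp (-T) - F) ≤ 2 * (Real.exp (-x)) ^ 2 * (1 / b) :=
    (mul_le_mul_of_nonneg_left h1 hb2.le).trans a1
  have a3 : q - 1 / b ^ 2 * K ≤ b ^ 2 * (Real.exp (-x) - T) := by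
    refine le_trans (le_of_eq ?_) (mul_le_mul_of_nonneg_left hl hb2.le)
    field_simp
  have a4 : b ^ 2 * (Real.exp (-x) - T) ≤ b ^ 2 * (Real.exp (Real.exp (-x) - T) - 1) := by
    refine mul_le_mul_of_nonneg_left ?_ hb2.le
    linarith [Real.add_one_le_exp (Real.exp (-x) - T)]
  have a5 : L * (q - 1 / b ^ 2 * K) ≤ b ^ 2 * (Real.exp (-T) - L) := by
    rw [hd]
    refine (mul_le_mul_of_nonneg_left (a3.trans a4) hL0.le).trans (le_of_eq ?_)
    ring
  linarith

lemma hw_pw_upper (n : ℕ) (hn : 1 ≤ n) (b x : ℝ) (hb0 : 0 < b)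
    (h : 2 * Real.pi * b ^ 2 * Real.exp (b ^ 2) = (n:ℝ) ^ 2)
    (hq1 : 1 / b ^ 2 * (Real.exp (-x) * (x ^ 2 / 2 + x + 1)) ≤ 1) :
    b ^ 2 * (stdNormalCDF (b + x / b) ^ n - Real.exp (-Real.exp (-x))) ≤
    Real.exp (-Real.exp (-x)) * (Real.exp (-x) * (x ^ 2 / 2 + x + 1) +
        (1 / b ^ 2) * (Real.exp (-x) * (x ^ 2 / 2 + x + 1)) ^ 2) := by
  obtain ⟨h1, h2⟩ := hw_core n hn b x hb0 h
  have hu := hwT_upper (1 / b ^ 2) x (by positivity)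
  have hle := hwT_le (1 / b ^ 2) x (by positivity)
  have hb2 : 0 < b ^ 2 := by positivity
  set q := Real.exp (-x) * (x ^ 2 / 2 + x + 1) with hq
  set T := hwT (1 / b ^ 2) x with hT
  set F := stdNormalCDF (b + x / b) ^ n with hF
  set L := Real.exp (-Real.exp (-x)) with hL
  have hL0 : 0 < L := Real.exp_pos _
  have hd : Real.exp (-T) = L * Real.exp (Real.exp (-x) - T) := by
    rw [hL, ← Real.exp_add]; congr 1; ring
  set d := Real.exp (-x) - T with hdd
  have hd0 : 0 ≤ d := by linarith
  have a1 := Real.abs_exp_sub_one_sub_id_le (x := d) (by rw [abs_of_nonneg hd0]; linarith)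
  have a2 : Real.exp d - 1 ≤ 1 / b ^ 2 * q + (1 / b ^ 2 * q) ^ 2 := by
    have := (abs_le.1 a1).2
    have := pow_le_pow_left₀ hd0 hu 2
    linarith
  calc b ^ 2 * (F - L) ≤ b ^ 2 * (L * (Real.exp d - 1)) := by
        gcongr; rw [mul_sub, ← hd]; linarith
    _ ≤ b ^ 2 * (L * (1 / b ^ 2 * q + (1 / b ^ 2 * q) ^ 2)) := by gcongr
    _ = _ := by field_simp

lemma hw_pointwise (b : ℕ → ℝ)
    (hb : ∀ n : ℕ, 1 ≤ n → 0 < b n ∧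
      2 * Real.pi * (b n) ^ 2 * Real.exp ((b n) ^ 2) = (n : ℝ) ^ 2) (x : ℝ) :
    Tendsto (fun n => (b n) ^ 2 * |stdNormalCDF (b n + x / b n) ^ n - Real.exp (-Real.exp (-x))|) atTop
      (nhds (Real.exp (-Real.exp (-x)) * (Real.exp (-x) * (x ^ 2 / 2 + x + 1)))) := by
  have hbt := hw_b_tendsto b hb
  set q := Real.exp (-x) * (x ^ 2 / 2 + x + 1) with hq
  have hq0 : 0 ≤ q := by
    apply mul_nonneg (Real.exp_pos _).le; nlinarith [sq_nonneg (x + 1)]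
  set L := Real.exp (-Real.exp (-x)) with hL
  have hL0 : 0 < L := Real.exp_pos _
  set K := ∫ u in Set.Ioi x, (u ^ 4 * Real.exp (-u)) / 8 with hK
  have hinv : Tendsto (fun n => 1 / b n) atTop (nhds 0) := by
    simp only [one_div]; exact hbt.inv_tendsto_atTop
  have hinv2 : Tendsto (fun n => 1 / (b n) ^ 2) atTop (nhds 0) := by
    simpa using hinv.pow 2
  have key : Tendsto (fun n => (b n) ^ 2 * (stdNormalCDF (b n + x / b n) ^ n - L)) atTop (nhds (L * q)) := by
    refine tendsto_of_tendsto_of_tendsto_of_le_of_le'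
      (g := fun n => L * (q - (1 / (b n) ^ 2) * K) - 2 * (Real.exp (-x)) ^ 2 * (1 / b n))
      (h := fun n => L * (q + (1 / (b n) ^ 2) * q ^ 2)) ?_ ?_ ?_ ?_
    · simpa using (((hinv2.mul_const K).const_sub q).const_mul L).sub (hinv.const_mul (2 * (Real.exp (-x)) ^ 2))
    · simpa using (((hinv2.mul_const (q ^ 2)).const_add q).const_mul L)
    · filter_upwards [eventually_ge_atTop 1] with n hn
      exact hw_pw_lower n hn (b n) x (hb n hn).1 (hb n hn).2
    · have h0 : Tendsto (fun n => 1 / (b n) ^ 2 * q) atTop (nhds 0) := by simpa using hinv2.mul_const q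
      filter_upwards [eventually_ge_atTop 1, h0.eventually_le_const (show (0:ℝ) < 1 by norm_num)] with n hn hq1
      exact hw_pw_upper n hn (b n) x (hb n hn).1 (hb n hn).2 hq1
  have := key.abs
  rw [abs_of_nonneg (by positivity)] at this
  refine this.congr fun n => ?_
  rw [abs_mul, abs_of_nonneg (sq_nonneg _)]

lemma hw_log (b : ℕ → ℝ)
    (hb : ∀ n : ℕ, 1 ≤ n → 0 < b n ∧
      2 * Real.pi * (b n) ^ 2 * Real.exp ((b n) ^ 2) = (n : ℝ) ^ 2) :
    Tendsto (fun n : ℕ => 2 * Real.log n / (b n) ^ 2) atTop (nhds 1) := by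
  have hbt := hw_b_tendsto b hb
  have hinv : Tendsto (fun n => 1 / b n) atTop (nhds 0) := by
    simp only [one_div]; exact hbt.inv_tendsto_atTop
  have hinv2 : Tendsto (fun n => 1 / (b n) ^ 2) atTop (nhds 0) := by
    simpa using hinv.pow 2
  have hlog : Tendsto (fun n => Real.log (b n) / b n) atTop (nhds 0) := by
    have := (Real.isLittleO_log_id_atTop.tendsto_div_nhds_zero).comp hbt
    simpa [Function.comp_def] using this
  have h : Tendsto (fun n => 1 + (Real.log (2 * Real.pi) * (1 / (b n) ^ 2) + 2 * (Real.log (b n) / b n * (1 / b n))))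
      atTop (nhds (1 + (Real.log (2 * Real.pi) * 0 + 2 * (0 * 0)))) :=
    ((hinv2.const_mul _).add ((hlog.mul hinv).const_mul 2)).const_add 1
  simp only [mul_zero, add_zero] at h
  refine h.congr' ?_
  filter_upwards [eventually_ge_atTop 1] with n hn
  obtain ⟨hb0, h⟩ := hb n hn
  have h1 := congrArg Real.log h
  rw [Real.log_mul (by positivity) (Real.exp_pos _).ne', Real.log_exp, Real.log_mul (by positivity) (by positivity),
    Real.log_pow, Real.log_pow] at h1
  push_cast at h1
  rw [← h1]
  field_simp
  ring

/-- If `b_n > 0` solves `2π b_n² exp(b_n²) = n²` and `Y_n = b_n(X_{(n)} - b_n)`, then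
`W₁(L(Y_n), Λ) = ((6(γ² + 2γ + 2) + π²)/(24 log n)) (1 + o(1))`. -/
theorem hall_w1 (b : ℕ → ℝ)
    (hb : ∀ n : ℕ, 1 ≤ n → 0 < b n ∧
      2 * Real.pi * (b n) ^ 2 * Real.exp ((b n) ^ 2) = (n : ℝ) ^ 2) :
    Tendsto (fun n : ℕ =>
        (∫ x : ℝ, |stdNormalCDF (b n + x / b n) ^ n - Real.exp (-Real.exp (-x))|) /
          ((6 * (Real.eulerMascheroniConstant ^ 2 + 2 * Real.eulerMascheroniConstant + 2) +
              Real.pi ^ 2) / (24 * Real.log n)))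
      atTop (nhds 1) := by
  have hbt := hw_b_tendsto b hb
  have hD : Tendsto (fun n : ℕ => ∫ x : ℝ, (b n) ^ 2 *
      |stdNormalCDF (b n + x / b n) ^ n - Real.exp (-Real.exp (-x))|) atTop
      (nhds (∫ x : ℝ, Real.exp (-Real.exp (-x)) * (Real.exp (-x) * (x ^ 2 / 2 + x + 1)))) := by
    refine tendsto_integral_filter_of_dominated_convergence
      (fun x : ℝ => 4 * Real.exp 49 * ((1 + x ^ 2) * Real.exp (-|x|))) ?_ ?_ (hw_g_int.const_mul _) ?_
    · refine Eventually.of_forall fun n => Measurable.aestronglyMeasurable ?_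
      have hm : Measurable stdNormalCDF := hw_cdf_mono.measurable
      fun_prop
    · filter_upwards [eventually_ge_atTop 4, hbt.eventually_ge_atTop 1] with n hn hb1
      refine ae_of_all _ fun x => ?_
      obtain ⟨hb0, h⟩ := hb n (by omega)
      have hc := hw_b_cube n (b n) (by positivity) hb0 h
      rw [Real.norm_of_nonneg (by positivity)]
      refine hw_dom n hn (b n) x hb1 ?_ h
      nlinarith [sq_nonneg (b n)]
    · exact ae_of_all _ fun x => hw_pointwise b hb x
  rw [hw_limit_integral] at hD
  set C := 6 * (Real.eulerMascheroniConstant ^ 2 + 2 * Real.eulerMascheroniConstant + 2) + Real.pi ^ 2 with hC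
  have hCpos : 0 < C := by
    have := Real.pi_pos
    have h2 : 0 < Real.pi ^ 2 := by positivity
    nlinarith [sq_nonneg (Real.eulerMascheroniConstant + 1)]
  have hfin := (hD.div_const (C / 12)).mul (hw_log b hb)
  rw [div_self (by positivity), mul_one] at hfin
  refine hfin.congr' ?_
  filter_upwards [eventually_ge_atTop 2] with n hn
  obtain ⟨hb0, -⟩ := hb n (by omega)
  have hlog : 0 < Real.log n := Real.log_pos (by exact_mod_cast hn)
  rw [integral_const_mul]
  field_simp
  ring
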